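/- Let G be a finite connected simple graph on n vertices with Laplacian matrix L. Then for any two distinct vertices u and v, the biharmonic distance satisfies d_B(u,v) = √(det(L²(u,v|u,v))) / (√n · τ(G)), equivalently d_B(u,v)² = det(L²(u,v|u,v)) / (n · τ(G)²), where L²(u,v|u,v) is the principal submatrix of L² obtained by deleting the rows and columns indexed by u and v, and τ(G) is the number of spanning trees of G. -/

import Mathlib

/-!
Let `x = e_u - e_v` and let `L⁺` be the pseudoinverse of `L`. From the Penrose equations, `L⁺` is
symmetric and `L L⁺ = L⁺ L` is symmetric and fixes every vector orthogonal to `𝟙`. Hence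
`y = (L⁺)² x` solves `L² y = x`, and the squared biharmonic distance is `xᵀ y = y u - y v`.
Grounding this system at `v`, that is, replacing row `v` of `L²` by `e_v`, and applying Cramer's
rule (`det_updateRow_mul_sub`) gives
`det ((L²) with row v replaced by e_v) * (y u - y v) = det (L²(u,v|u,v))`.

The determinant on the left equals `n * (det L')²`, where `L'` is `L` with row `v` replaced by
`e_v` (`det_sq_updateRow`), and `det L'` is the number of spanning trees by the matrix-tree theorem
(`det_lapMatrix_updateRow`).

The matrix-tree theorem is proved without the Cauchy-Binet formula. Each row `i ≠ r` of the
Laplacian is `∑ j ~ i, (e_i - e_j)`, so by multilinearity the determinant is a sum over maps `f`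
choosing a neighbour `f i` (a parent) of each `i ≠ r`. The summand is `1` if every vertex reaches
`r` under iteration of `f`, and `0` otherwise; the maps of the first kind are in bijection with the
spanning trees of `G`, by orienting a tree towards its root `r`.
-/

open Matrix Finset

/-- The number of spanning trees of a simple graph: the number of subgraphs
on the full vertex set that are trees. -/
noncomputable def spanningTreeCount {V : Type*} (G : SimpleGraph V) : ℕ :=
  Nat.card {H : G.Subgraph // H.IsSpanning ∧ H.coe.IsTree}

/-- The graph with an edge from every vertex `i ≠ r` to its parent `f i`. -/
def parentGraph {V : Type*} (r : V) (f : V → V) : SimpleGraph V :=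
  SimpleGraph.fromRel fun a b => a ≠ r ∧ f a = b

/-- The parent maps of `G` with root `r`: the root is fixed and every other vertex is sent to one
of its neighbours. Cycles are allowed. -/
def parentMaps {V : Type*} [Fintype V] [DecidableEq V] (G : SimpleGraph V) [DecidableRel G.Adj]
    (r : V) : Finset (V → V) :=
  Fintype.piFinset fun i => if i = r then {r} else G.neighborFinset i

/-- Every vertex is sent to the root `r` by some iterate of `f`. -/
def ReachesRoot {V : Type*} (r : V) (f : V → V) : Prop := ∀ i, ∃ k, f^[k] i = r

section ParentMaps

/-! ### Parent maps and spanning trees -/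

variable {V : Type*} [Fintype V] [DecidableEq V] {G : SimpleGraph V} [DecidableRel G.Adj] {r : V}
  {f g : V → V}

lemma parentMaps_root (hf : f ∈ parentMaps G r) : f r = r := by
  have := Fintype.mem_piFinset.1 hf r
  simpa using this

lemma parentMaps_adj (hf : f ∈ parentMaps G r) {i : V} (hi : i ≠ r) : G.Adj i (f i) := by
  have := Fintype.mem_piFinset.1 hf i
  simpa [hi] using this

lemma mem_parentMaps (h : f r = r) (h' : ∀ i, i ≠ r → G.Adj i (f i)) : f ∈ parentMaps G r := by
  refine Fintype.mem_piFinset.2 fun i => ?_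
  by_cases hi : i = r
  · subst hi; simp [h]
  · simpa [hi] using h' i hi

lemma parentGraph_adj_parent (hf : f ∈ parentMaps G r) {i : V} (hi : i ≠ r) :
    (parentGraph r f).Adj i (f i) := by
  simp only [parentGraph, SimpleGraph.fromRel_adj]
  exact ⟨(parentMaps_adj hf hi).ne, Or.inl (by simp [hi])⟩

lemma parentGraph_le (hf : f ∈ parentMaps G r) : parentGraph r f ≤ G := by
  intro a b hab
  simp only [parentGraph, SimpleGraph.fromRel_adj] at hab
  rcases hab with ⟨-, ⟨ha, rfl⟩ | ⟨hb, rfl⟩⟩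
  · exact parentMaps_adj hf ha
  · exact (parentMaps_adj hf hb).symm

lemma parentGraph_connected (hf : f ∈ parentMaps G r) (hr : ReachesRoot r f) :
    (parentGraph r f).Connected := by
  have key : ∀ k i, f^[k] i = r → (parentGraph r f).Reachable i r := by
    intro k
    induction k with
    | zero => rintro i rfl; exact SimpleGraph.Reachable.refl _
    | succ k ih =>
      intro i hi
      by_cases h : i = r
      · rw [h]
      · exact (parentGraph_adj_parent hf h).reachable.trans (ih _ hi)
  have : Nonempty V := ⟨r⟩
  refine SimpleGraph.Connected.mk fun a b => ?_
  obtain ⟨k, hk⟩ := hr a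
  obtain ⟨l, hl⟩ := hr b
  exact (key k a hk).trans (key l b hl).symm

/-- The parent graph has at most `n - 1` edges, so it is a tree once it is connected. -/
lemma parentGraph_isTree (hf : f ∈ parentMaps G r) (hr : ReachesRoot r f) :
    (parentGraph r f).IsTree := by
  have hc := parentGraph_connected hf hr
  refine SimpleGraph.isTree_iff_connected_and_card.2
    ⟨hc, le_antisymm ?_ hc.card_vert_le_card_edgeSet_add_one⟩
  have hsub : (parentGraph r f).edgeSet ⊆
      ((univ.erase r).image fun i => s(i, f i) : Finset (Sym2 V)) := by
    intro e
    induction e using Sym2.ind with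
    | _ a b =>
      intro hab
      simp only [SimpleGraph.mem_edgeSet, parentGraph, SimpleGraph.fromRel_adj] at hab
      simp only [coe_image, Set.mem_image, mem_coe, mem_erase, mem_univ, and_true]
      rcases hab with ⟨-, ⟨ha, rfl⟩ | ⟨hb, rfl⟩⟩
      · exact ⟨a, ha, rfl⟩
      · exact ⟨b, hb, Sym2.eq_swap⟩
  have h1 := Set.ncard_le_ncard hsub (Finset.finite_toSet _)
  rw [Set.ncard_coe_finset] at h1
  have h2 := h1.trans card_image_le
  rw [card_erase_of_mem (mem_univ r), card_univ] at h2
  have h3 : 0 < Fintype.card V := Fintype.card_pos_iff.2 ⟨r⟩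
  rw [Nat.card_coe_set_eq, Nat.card_eq_fintype_card]
  omega

/-- If `f` and `g` differ at `x`, the edge from `x` to `f x` must be the edge from `f x` to its
`g`-parent `x`; then they differ at `f x` too, and the `f`-orbit of `x` avoids the root. -/
lemma parentGraph_injective (hf : f ∈ parentMaps G r) (hg : g ∈ parentMaps G r)
    (hr : ReachesRoot r f) (h : parentGraph r f = parentGraph r g) : f = g := by
  have step : ∀ x, x ≠ r ∧ f x ≠ g x → f x ≠ r ∧ f (f x) ≠ g (f x) := by
    rintro x ⟨hx, hne⟩
    have hadj := parentGraph_adj_parent hf hx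
    rw [h] at hadj
    simp only [parentGraph, SimpleGraph.fromRel_adj] at hadj
    rcases hadj with ⟨-, ⟨-, h1⟩ | ⟨h1, h2⟩⟩
    · exact absurd h1.symm hne
    · refine ⟨h1, fun h3 => ?_⟩
      -- otherwise `f` swaps `x` and `f x`, neither of which is the root
      rw [h2] at h3
      have : ∀ k, f^[k] x = x ∨ f^[k] x = f x := by
        intro k
        induction k with
        | zero => exact Or.inl rfl
        | succ k ih =>
          rw [Function.iterate_succ_apply']
          rcases ih with e | e
          · rw [e]; exact Or.inr rfl
          · rw [e]; exact Or.inl h3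
      obtain ⟨k, hk⟩ := hr x
      rcases this k with e | e
      · exact hx (e.symm.trans hk)
      · exact h1 (e.symm.trans hk)
  by_contra hne
  obtain ⟨x, hx⟩ := Function.ne_iff.1 hne
  have hxr : x ≠ r := by
    rintro rfl
    exact hx ((parentMaps_root hf).trans (parentMaps_root hg).symm)
  have all : ∀ k, f^[k] x ≠ r ∧ f (f^[k] x) ≠ g (f^[k] x) := by
    intro k
    induction k with
    | zero => exact ⟨hxr, hx⟩
    | succ k ih => rw [Function.iterate_succ_apply']; exact step _ ih
  obtain ⟨k, hk⟩ := hr x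
  exact (all k).1 hk

/-- Every spanning tree arises from a parent map: send each vertex to a neighbour closer to the
root; the resulting parent graph is connected, and a tree is minimally connected. -/
lemma exists_parentMap {T : SimpleGraph V} (hT : T.IsTree) (hle : T ≤ G) :
    ∃ f ∈ parentMaps G r, ReachesRoot r f ∧ parentGraph r f = T := by
  classical
  have hex : ∀ i, ∃ j, (i = r → j = r) ∧ (i ≠ r → T.Adj i j ∧ T.dist j r < T.dist i r) := by
    intro i
    by_cases hi : i = r
    · exact ⟨r, fun _ => rfl, fun h => absurd hi h⟩
    · obtain ⟨p, hp⟩ := (hT.connected i r).exists_walk_length_eq_dist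
      cases p with
      | nil => exact absurd rfl hi
      | cons hadj q =>
        refine ⟨_, fun h => absurd h hi, fun _ => ⟨hadj, ?_⟩⟩
        have := SimpleGraph.dist_le q
        rw [SimpleGraph.Walk.length_cons] at hp
        omega
  choose f hf1 hf2 using hex
  have hmemT : f ∈ parentMaps T r := mem_parentMaps (hf1 r rfl) fun i hi => (hf2 i hi).1
  have hmem : f ∈ parentMaps G r := mem_parentMaps (hf1 r rfl) fun i hi => hle (hf2 i hi).1
  have hr : ReachesRoot r f := by
    have : ∀ d i, T.dist i r ≤ d → ∃ k, f^[k] i = r := by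
      intro d
      induction d with
      | zero =>
        intro i hi
        exact ⟨0, (hT.connected.dist_eq_zero_iff).1 (Nat.le_zero.1 hi)⟩
      | succ d ih =>
        intro i hi
        by_cases h : i = r
        · exact ⟨0, h⟩
        · obtain ⟨k, hk⟩ := ih (f i) (by have := (hf2 i h).2; omega)
          exact ⟨k + 1, hk⟩
    exact fun i => this _ i le_rfl
  refine ⟨f, hmem, hr, le_antisymm (parentGraph_le hmemT) ?_⟩
  exact (SimpleGraph.isTree_iff_minimal_connected.1 hT).2 (parentGraph_connected hmem hr)
    (parentGraph_le hmemT)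

open Classical in
/-- Spanning trees of `G` correspond to the parent maps that lead every vertex to the root. -/
lemma spanningTreeCount_eq_card (G : SimpleGraph V) [DecidableRel G.Adj] (r : V) :
    spanningTreeCount G = #{f ∈ parentMaps G r | ReachesRoot r f} := by
  have key : ∀ f : {f // f ∈ ({f ∈ parentMaps G r | ReachesRoot r f} : Finset (V → V))},
      f.1 ∈ parentMaps G r ∧ ReachesRoot r f.1 := fun f => mem_filter.1 f.2
  let φ : {f // f ∈ ({f ∈ parentMaps G r | ReachesRoot r f} : Finset (V → V))} →
      {H : G.Subgraph // H.IsSpanning ∧ H.coe.IsTree} := fun f =>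
    ⟨SimpleGraph.toSubgraph (parentGraph r f.1) (parentGraph_le (key f).1),
      SimpleGraph.toSubgraph.isSpanning _ _,
      (SimpleGraph.Subgraph.spanningCoeEquivCoeOfSpanning _
        (SimpleGraph.toSubgraph.isSpanning _ _)).isTree_iff.1
        (parentGraph_isTree (key f).1 (key f).2)⟩
  have hφ : Function.Bijective φ := by
    constructor
    · intro f g hfg
      refine Subtype.ext (parentGraph_injective (key f).1 (key g).1 (key f).2 ?_)
      exact congrArg (fun H => H.1.spanningCoe) hfg
    · rintro ⟨H, hs, ht⟩
      obtain ⟨f, hf, hr, hfT⟩ := exists_parentMap (G := G) (r := r)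
        ((H.spanningCoeEquivCoeOfSpanning hs).isTree_iff.2 ht) H.spanningCoe_le
      refine ⟨⟨f, mem_filter.2 ⟨hf, hr⟩⟩, Subtype.ext ?_⟩
      refine SimpleGraph.Subgraph.ext ?_ ?_
      · exact (SimpleGraph.Subgraph.isSpanning_iff.1 hs).symm
      · change (parentGraph r f).Adj = H.Adj
        rw [hfT]
        rfl
  rw [spanningTreeCount, ← Nat.card_eq_of_bijective φ hφ, Nat.card_eq_fintype_card,
    Fintype.card_coe]

/-! ### The matrix-tree theorem -/

/-- The matrix with row `e_r` at the root and row `e_i - e_{f i}` at every other vertex `i`. -/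
def parentMatrix (r : V) (f : V → V) : Matrix V V ℝ := fun i =>
  if i = r then Pi.single r 1 else Pi.single i 1 - Pi.single (f i) 1

/-- Ordered by the number of steps to the root, the parent matrix is triangular with unit
diagonal. -/
lemma det_parentMatrix_of_reachesRoot (hf : f ∈ parentMaps G r) (hr : ReachesRoot r f) :
    (parentMatrix r f).det = 1 := by
  classical
  let b : V → ℕ := fun i => Nat.find (hr i)
  have hb : ∀ i, i ≠ r → b (f i) < b i := by
    intro i hi
    have h0 : b i ≠ 0 := by
      intro h
      have := Nat.find_spec (hr i)
      rw [show Nat.find (hr i) = 0 from h] at this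
      exact hi this
    obtain ⟨m, hm⟩ := Nat.exists_eq_succ_of_ne_zero h0
    have h1 := Nat.find_spec (hr i)
    rw [show Nat.find (hr i) = m + 1 from hm] at h1
    have : b (f i) ≤ m := Nat.find_min' (hr (f i)) h1
    omega
  have hT : (parentMatrix r f)ᵀ.BlockTriangular b := by
    intro i j hij
    have hne : i ≠ j := by rintro rfl; exact lt_irrefl _ hij
    change parentMatrix r f j i = 0
    unfold parentMatrix
    by_cases hj : j = r
    · subst hj; simp [hne]
    · have : i ≠ f j := by rintro rfl; exact absurd (hb j hj) (not_lt.2 hij.le)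
      simp [hj, hne, this]
  rw [← det_transpose, hT.det]
  refine prod_eq_one fun k _ => ?_
  have : (parentMatrix r f)ᵀ.toSquareBlock b k = 1 := by
    ext ⟨i, hi⟩ ⟨j, hj⟩
    change parentMatrix r f j i = _
    unfold parentMatrix
    by_cases hjr : j = r
    · subst hjr; simp [Matrix.one_apply, Pi.single_apply]
    · have : i ≠ f j := by
        rintro rfl
        have := hb j hjr
        omega
      simp [Matrix.one_apply, Pi.single_apply, hjr, this]
  rw [this, det_one]

/-- The indicator of the vertices that never reach the root lies in the kernel. -/
lemma det_parentMatrix_of_not_reachesRoot (hf : f ∈ parentMaps G r) (hr : ¬ ReachesRoot r f) :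
    (parentMatrix r f).det = 0 := by
  classical
  have hiff : ∀ i, i ≠ r → ((∃ k, f^[k] i = r) ↔ ∃ k, f^[k] (f i) = r) := by
    intro i hi
    constructor
    · rintro ⟨k, hk⟩
      cases k with
      | zero => exact absurd hk hi
      | succ k => exact ⟨k, hk⟩
    · rintro ⟨k, hk⟩
      exact ⟨k + 1, hk⟩
  refine Matrix.exists_mulVec_eq_zero_iff.1 ⟨fun i => if ∃ k, f^[k] i = r then 0 else 1, ?_, ?_⟩
  · intro h
    refine hr fun i => ?_
    have := congrFun h i
    by_contra hc
    rw [if_neg hc] at this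
    exact one_ne_zero this
  · ext i
    unfold parentMatrix Matrix.mulVec
    by_cases hi : i = r
    · subst hi
      have : ∃ k, f^[k] i = i := ⟨0, rfl⟩
      simp [this]
    · simp only [hi, if_false, sub_dotProduct, single_one_dotProduct, Pi.zero_apply]
      simp only [hiff i hi, sub_self]

open Classical in
/-- **Matrix-tree theorem**: expanding each non-root row of the Laplacian as
`∑ j ~ i, (e_i - e_j)` by multilinearity turns the determinant into a count of parent maps. -/
theorem det_lapMatrix_updateRow (G : SimpleGraph V) [DecidableRel G.Adj] (r : V) :
    ((G.lapMatrix ℝ).updateRow r (Pi.single r 1)).det = spanningTreeCount G := by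
  have hrow : (G.lapMatrix ℝ).updateRow r (Pi.single r 1) =
      fun i => ∑ j ∈ (if i = r then {r} else G.neighborFinset i),
        (if i = r then Pi.single r 1 else Pi.single i 1 - Pi.single j 1 : V → ℝ) := by
    funext i
    by_cases hi : i = r
    · subst hi; simp
    · rw [Matrix.updateRow_ne hi]
      simp only [hi, if_false]
      ext k
      simp [SimpleGraph.lapMatrix, SimpleGraph.degMatrix, Matrix.diagonal_apply,
        Pi.single_apply, SimpleGraph.adjMatrix_apply, sum_sub_distrib, Finset.sum_apply, eq_comm]
  rw [hrow]
  have h := (Matrix.detRowAlternating (R := ℝ) (n := V)).toMultilinearMap.map_sum_finset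
    (fun i j => (if i = r then Pi.single r 1 else Pi.single i 1 - Pi.single j 1 : V → ℝ))
    (fun i => if i = r then {r} else G.neighborFinset i)
  refine h.trans ?_
  change ∑ f ∈ parentMaps G r, (parentMatrix r f).det = _
  rw [spanningTreeCount_eq_card G r, card_filter, Nat.cast_sum]
  refine sum_congr rfl fun f hf => ?_
  by_cases hr : ReachesRoot r f
  · simp [hr, det_parentMatrix_of_reachesRoot hf hr]
  · simp [hr, det_parentMatrix_of_not_reachesRoot hf hr]

end ParentMaps

lemma spanningTreeCount_ne_zero {V : Type*} [Fintype V] {G : SimpleGraph V} (hG : G.Connected) :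
    spanningTreeCount G ≠ 0 := by
  classical
  obtain ⟨T, hle, hT⟩ := hG.exists_isTree_le
  have : Nonempty {H : G.Subgraph // H.IsSpanning ∧ H.coe.IsTree} :=
    ⟨SimpleGraph.toSubgraph T hle, SimpleGraph.toSubgraph.isSpanning _ _,
      (SimpleGraph.Subgraph.spanningCoeEquivCoeOfSpanning _
        (SimpleGraph.toSubgraph.isSpanning _ _)).isTree_iff.1 hT⟩
  exact Nat.card_pos.ne'

section LinearAlgebra

/-! ### Grounded determinants -/

variable {V : Type*} [Fintype V] [DecidableEq V]

/-- For a symmetric `L` with zero row sums, replacing row `v` of `L²` by `e_v` gives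
`L' (1 + (𝟙 - e_v) 𝟙ᵀ) L'`, where `L'` is `L` with row `v` replaced by `e_v`; the middle factor
has determinant `n`. -/
lemma det_sq_updateRow (L : Matrix V V ℝ) (hs : Lᵀ = L) (h1 : L *ᵥ 1 = 0) (v : V) :
    ((L * L).updateRow v (Pi.single v 1)).det =
      Fintype.card V * (L.updateRow v (Pi.single v 1)).det ^ 2 := by
  set L' := L.updateRow v (Pi.single v 1) with hL'
  have hrow : ∀ i, ∑ k, L i k = 0 := fun i => by
    simpa [Matrix.mulVec, dotProduct] using congrFun h1 i
  have hcol : ∀ j, ∑ k, L k j = 0 := fun j => by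
    rw [← hrow j]; exact sum_congr rfl fun k _ => congrFun (congrFun hs j) k
  have hcol' : ∀ j, ∑ k, L' k j = (Pi.single v 1 : V → ℝ) j - L v j := fun j => by
    have : ∀ k, L' k j = L k j + if k = v then (Pi.single v 1 : V → ℝ) j - L v j else 0 := by
      intro k
      by_cases hk : k = v
      · subst hk; simp [hL']
      · simp [hL', hk]
    simp [this, sum_add_distrib, hcol]
  let X : Matrix V V ℝ := fun i j => L i j + ((Pi.single v 1 : V → ℝ) j - L v j)
  have hX : (1 + replicateCol Unit (1 - Pi.single v 1 : V → ℝ) * replicateRow Unit (1 : V → ℝ)) * L'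
      = X := by
    ext i j
    rw [add_mul, one_mul, Matrix.mul_assoc, Matrix.add_apply, Matrix.mul_apply]
    simp only [replicateCol_apply, Matrix.mul_apply, replicateRow_apply, Pi.one_apply, one_mul,
      hcol', univ_unique, sum_singleton]
    by_cases hi : i = v
    · subst hi; simp [hL', X]
    · simp [hL', X, hi]
  have hA : (L * L).updateRow v (Pi.single v 1) = L' * X := by
    ext i j
    rw [Matrix.mul_apply]
    by_cases hi : i = v
    · subst hi; simp [hL', X, Pi.single_apply]
    · simp only [hL', X, Matrix.updateRow_ne hi, mul_add, sum_add_distrib, ← sum_mul, hrow i,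
        zero_mul, add_zero, Matrix.mul_apply]
  rw [hA, ← hX, det_mul, det_mul, det_one_add_replicateCol_mul_replicateRow]
  have : (1 : V → ℝ) ⬝ᵥ (1 - Pi.single v 1) = Fintype.card V - 1 := by
    simp [dotProduct]
  rw [this]
  ring

/-- Cramer's rule for the system `A z = e_u - e_v` grounded at `v`. -/
lemma det_updateRow_mul_sub (A : Matrix V V ℝ) (h1 : A *ᵥ 1 = 0) {u v : V} (huv : u ≠ v)
    (y : V → ℝ) (hy : A *ᵥ y = Pi.single u 1 - Pi.single v 1) :
    (A.updateRow v (Pi.single v 1)).det * (y u - y v) =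
      (A.submatrix (fun i : {w : V // w ≠ u ∧ w ≠ v} => (i : V))
        (fun j : {w : V // w ≠ u ∧ w ≠ v} => (j : V))).det := by
  set A' := A.updateRow v (Pi.single v 1) with hA'
  let z : V → ℝ := y - y v • 1
  have hz : A' *ᵥ z = Pi.single u 1 := by
    ext i
    by_cases hi : i = v
    · subst hi
      simp [hA', Matrix.mulVec, z, huv]
    · have : (A *ᵥ z) i = (A' *ᵥ z) i := by simp [hA', Matrix.mulVec, hi]
      rw [← this, mulVec_sub, mulVec_smul, h1, hy]
      simp [hi]
  have h2 : A'.det * z u = A'.adjugate u u := by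
    have := congrArg (fun w => (A'.adjugate *ᵥ w) u) hz
    simpa [Matrix.mulVec_mulVec, adjugate_mul, smul_mulVec] using this
  have h3 : z u = y u - y v := by simp [z]
  rw [← h3, h2, adjugate_apply,
    twoBlockTriangular_det _ (fun w => w ≠ u ∧ w ≠ v)]
  · have e1 : toSquareBlockProp (A'.updateRow u (Pi.single u 1)) (fun w => ¬ (w ≠ u ∧ w ≠ v))
        = 1 := by
      ext ⟨i, hi⟩ ⟨j, hj⟩
      by_cases hiu : i = u
      · subst hiu; simp [toSquareBlockProp_def, Matrix.one_apply, Pi.single_apply, eq_comm]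
      · have hiv : i = v := by by_contra h; exact hi ⟨hiu, h⟩
        subst hiv
        simp [toSquareBlockProp_def, Matrix.one_apply, Pi.single_apply, eq_comm (a := j), hA',
          Matrix.updateRow_ne hiu]
    rw [e1, det_one, mul_one]
    congr 1
    ext ⟨i, hi⟩ ⟨j, hj⟩
    simp [toSquareBlockProp_def, hA', hi.1, hi.2]
  · intro i hi j hj
    by_cases hiu : i = u
    · subst hiu; simp [hj.1]
    · have hiv : i = v := by by_contra h; exact hi ⟨hiu, h⟩
      subst hiv
      simp [hA', hiu, hj.2]

end LinearAlgebra

/-- Determinant characterization of biharmonic distance: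
for distinct vertices `u, v` of a connected graph `G` on `n` vertices,
`d_B(u,v)² = det(L²(u,v|u,v)) / (n · τ(G)²)`, where `L²(u,v|u,v)` deletes the
rows and columns of `u` and `v`. -/
theorem biharmonic_distance_sq_eq_det_div
    {V : Type*} [Fintype V] [DecidableEq V] {n : ℕ}
    (G : SimpleGraph V) [DecidableRel G.Adj] (hG : G.Connected)
    (hn : Fintype.card V = n)
    (Lp : Matrix V V ℝ)
    (hp1 : G.lapMatrix ℝ * Lp * G.lapMatrix ℝ = G.lapMatrix ℝ)
    (hp2 : Lp * G.lapMatrix ℝ * Lp = Lp)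
    (hp3 : (G.lapMatrix ℝ * Lp)ᵀ = G.lapMatrix ℝ * Lp)
    (hp4 : (Lp * G.lapMatrix ℝ)ᵀ = Lp * G.lapMatrix ℝ)
    (u v : V) (huv : u ≠ v) :
    (Lp * Lp) u u + (Lp * Lp) v v - 2 * (Lp * Lp) u v
      = (((G.lapMatrix ℝ * G.lapMatrix ℝ).submatrix
            (fun i : {w : V // w ≠ u ∧ w ≠ v} => (i : V))
            (fun j : {w : V // w ≠ u ∧ w ≠ v} => (j : V))).det)
          / ((n : ℝ) * (spanningTreeCount G : ℝ) ^ 2) := by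
  have hs : (G.lapMatrix ℝ)ᵀ = G.lapMatrix ℝ := G.isSymm_lapMatrix ℝ
  have h1 : G.lapMatrix ℝ *ᵥ 1 = 0 := G.lapMatrix_mulVec_const_eq_zero (R := ℝ)
  have hτ : (spanningTreeCount G : ℝ) ≠ 0 := Nat.cast_ne_zero.2 (spanningTreeCount_ne_zero hG)
  have hn0 : (n : ℝ) ≠ 0 := by
    rw [← hn]
    exact Nat.cast_ne_zero.2 (Fintype.card_pos_iff.2 ⟨u⟩).ne'
  have hdet := det_sq_updateRow (G.lapMatrix ℝ) hs h1 v
  rw [det_lapMatrix_updateRow, hn] at hdet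
  have hker : ∀ x : V → ℝ, G.lapMatrix ℝ *ᵥ x = 0 → ∀ i j, x i = x j := fun x hx i j =>
    G.lapMatrix_mulVec_eq_zero_iff_forall_reachable.1 hx i j (hG i j)
  generalize G.lapMatrix ℝ = L at *
  -- `L L⁺` and `L⁺ L` are the same symmetric projection
  have hLQ : L * (L * Lp) = L := by
    have := congrArg transpose hp1
    rwa [transpose_mul, hp3, hs] at this
  have hQL : Lp * L * L = L := by
    have := congrArg transpose (Matrix.mul_assoc L Lp L ▸ hp1)
    rwa [transpose_mul, hp4, hs] at this
  have hQ : L * Lp = Lp * L := by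
    calc L * Lp = Lp * L * L * Lp := by rw [hQL]
      _ = Lp * (L * (L * Lp)) := by simp only [Matrix.mul_assoc]
      _ = Lp * L := by rw [hLQ]
  have hLps : Lpᵀ = Lp := by
    have e : Lpᵀ * L = L * Lp := by rw [← hp3, transpose_mul, hs]
    calc Lpᵀ = (Lp * L * Lp)ᵀ := by rw [hp2]
      _ = Lpᵀ * (L * Lpᵀ) := by rw [transpose_mul, transpose_mul, hs]
      _ = Lpᵀ * (Lp * L) := by rw [← hp4, transpose_mul, hs]
      _ = Lpᵀ * L * Lp := by rw [← hQ, Matrix.mul_assoc]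
      _ = Lp := by rw [e, hQ, hp2]
  have hsymm : (Lp * Lp) v u = (Lp * Lp) u v := by
    have : (Lp * Lp)ᵀ = Lp * Lp := by rw [transpose_mul, hLps]
    exact congrFun (congrFun this u) v
  set x : V → ℝ := Pi.single u 1 - Pi.single v 1 with hx
  -- `x - L L⁺ x` is constant, being in the kernel of `L`, and has coordinate sum zero
  have hQx : (L * Lp) *ᵥ x = x := by
    have hk : L *ᵥ (x - (L * Lp) *ᵥ x) = 0 := by
      rw [mulVec_sub, mulVec_mulVec, hLQ, sub_self]
    have hsum : ∑ i, (x - (L * Lp) *ᵥ x) i = 0 := by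
      have e1 : 1 ⬝ᵥ ((L * Lp) *ᵥ x) = 0 := by
        rw [dotProduct_mulVec, ← vecMul_vecMul, ← mulVec_transpose L, hs, h1, zero_vecMul,
          zero_dotProduct]
      have e2 : 1 ⬝ᵥ x = 0 := by simp [hx, dotProduct_sub]
      rw [← one_dotProduct, dotProduct_sub, e1, e2, sub_zero]
    have hc : ∀ i, (x - (L * Lp) *ᵥ x) i = 0 := by
      intro i
      rw [sum_congr rfl fun j _ => hker _ hk j i, sum_const, card_univ, hn, nsmul_eq_mul] at hsum
      exact (mul_eq_zero.1 hsum).resolve_left hn0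
    ext i
    have := hc i
    rw [Pi.sub_apply] at this
    linarith
  have hy : (L * L) *ᵥ ((Lp * Lp) *ᵥ x) = x := by
    rw [mulVec_mulVec]
    calc (L * L * (Lp * Lp)) *ᵥ x = (L * (L * Lp) * Lp) *ᵥ x := by simp only [Matrix.mul_assoc]
      _ = x := by rw [hLQ, hQx]
  have key := det_updateRow_mul_sub (L * L) (by rw [← mulVec_mulVec, h1, mulVec_zero]) huv _ hy
  rw [hdet] at key
  rw [← key, mul_div_cancel_left₀ _ (mul_ne_zero hn0 (pow_ne_zero 2 hτ))]
  simp only [hx, mulVec_sub, mulVec_single_one, Pi.sub_apply, Matrix.col_apply]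
  rw [hsymm]
  ring
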